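/- arXiv:1104.0324 — 3 statements merged into one kernel-verified Lean document; each statement's English description precedes it below -/
import Mathlib

section
/- Let p be an internal point and K = {h ∈ H : p^h = p} its stabilizer in H. For every nonzero square π ∈ F_q with π ≠ 4 and π - 4 a nonsquare, |K ∩ [π]| = 2. -/
/-!
A point `(x, y, z)` is identified with the symmetric matrix `S = (x y; y z)`, and the element of `H`
attached to `A = (a b; c d)` in `SL(2, K)` acts by `S ↦ Aᵀ S A`. If it fixes the point then
`Aᵀ S A = l S`, and comparing determinants gives `l = 1` or `l = -1` (`scalar_sq`).

* If `l = -1`, then `A` anticommutes with the traceless invertible matrix `N = (-y -z; x y)`, so its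
  trace is `0`, and `T = (tr A)² = 0` (`anti_case`).
* If `l = 1`, then `A` commutes with `N`, hence `A = s + t N` (`comm_case`), where
  `s² - t² n = det A = 1` with `n = y² - x z`, and `4 s² = π`.

Hence `s` is determined up to sign, and so is `t`, since `t² = (π - 4) / (4 n)` is a nonzero square as
a quotient of two nonsquares. The pairs `(s, t)` and `(-s, -t)` give the same element of `H`, so
exactly two elements remain.
-/

open scoped Classical

noncomputable section

namespace ConicPaper

variable (K : Type) [Field K] [Fintype K]

/-- Points (and also lines, via homogeneous coordinates) of `PG(2,q)`. -/
abbrev Pt := Projectivization K (Fin 3 → K)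

instance : Fintype (Pt K) := @Fintype.ofFinite _ (Quotient.finite _)

/-- `a` is a nonsquare in `K`. -/
def Nonsq (a : K) : Prop := ¬ IsSquare a

/-- The quadratic form `Q(x0,x1,x2) = x1^2 - x0*x2` defining the conic. -/
def Qf (v : Fin 3 → K) : K := v 1 ^ 2 - v 0 * v 2

/-- A point is internal when `Q` of (a representative of) it is a nonsquare. -/
def Internal (p : Pt K) : Prop := Nonsq K (Qf K p.rep)

/-- A point is external when `Q` of it is a nonzero square. -/
def External (p : Pt K) : Prop := Qf K p.rep ≠ 0 ∧ IsSquare (Qf K p.rep)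

/-- The point `p` lies on the line `ℓ = [b0,b1,b2]`. -/
def OnL (p ℓ : Pt K) : Prop :=
  p.rep 0 * ℓ.rep 0 + p.rep 1 * ℓ.rep 1 + p.rep 2 * ℓ.rep 2 = 0

/-- Discriminant `b1^2 - 4 b0 b2` of a line. -/
def lineDisc (ℓ : Pt K) : K := ℓ.rep 1 ^ 2 - 4 * ℓ.rep 0 * ℓ.rep 2

/-- A line is a passant when its discriminant is a nonsquare. -/
def Passant (ℓ : Pt K) : Prop := Nonsq K (lineDisc K ℓ)

/-- A line is a secant when its discriminant is a nonzero square. -/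
def Secant (ℓ : Pt K) : Prop := lineDisc K ℓ ≠ 0 ∧ IsSquare (lineDisc K ℓ)

/-- The incidence pairing of the vector `w` with the polar line
`p^⊥ = [z, -2y, x]` of the point `p = (x,y,z)`. -/
def perpDot (p : Pt K) (w : Fin 3 → K) : K :=
  w 0 * p.rep 2 + w 1 * (-2 * p.rep 1) + w 2 * p.rep 0

/-- The point `r` lies on the passant line `p^⊥`. -/
def OnPerp (p r : Pt K) : Prop := perpDot K p r.rep = 0

/-- The (finite) set `I` of internal points, as a type. -/
abbrev Ipts := {p : Pt K // Internal K p}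

instance : Fintype (Ipts K) := Fintype.ofFinite _

/-- The action of a (nonsingular) matrix `M` on points of `PG(2,q)`:
`p ↦ p·M`.  (If `p.rep ᵥ* M` were zero -- impossible for invertible `M` --
we return `p`, making the function total.) -/
def actPt (M : Matrix (Fin 3) (Fin 3) K) (p : Pt K) : Pt K :=
  if h : Matrix.vecMul p.rep M ≠ 0 then Projectivization.mk K (Matrix.vecMul p.rep M) h else p

/-- The group `H ≅ PSL(2,q)`, given by its set of matrix representatives. -/
def Hset : Set (Matrix (Fin 3) (Fin 3) K) :=
  {M | ∃ a b c d : K, a * d - b * c = 1 ∧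
    M = !![a^2, a*b, b^2; 2*a*c, a*d + b*c, 2*b*d; c^2, c*d, d^2]}

/-- The class set `{g ∈ H : T(g) = tr(g) + 1 = s}` for `s ∈ F_q`. -/
def classOf (s : K) : Set (Matrix (Fin 3) (Fin 3) K) :=
  {g | g ∈ Hset K ∧ Matrix.trace g + 1 = s}

/-- The class set `[4] = {g ∈ H : T(g) = 4, g ≠ 1}`. -/
def class4 : Set (Matrix (Fin 3) (Fin 3) K) :=
  {g | g ∈ Hset K ∧ Matrix.trace g + 1 = 4 ∧ g ≠ 1}

section Helpers

variable {F : Type} [Field F]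

/-- The element of `H` attached to the matrix `(a b; c d)`. -/
def symSq (a b c d : F) : Matrix (Fin 3) (Fin 3) F :=
  !![a^2, a*b, b^2; 2*a*c, a*d + b*c, 2*b*d; c^2, c*d, d^2]

/-- The element of `H` attached to `s + t N`, where `N = (-y -z; x y)`. -/
def torusElt (x y z s t : F) : Matrix (Fin 3) (Fin 3) F :=
  symSq (s - t * y) (-(t * z)) (t * x) (s + t * y)

lemma trace_symSq {a b c d : F} (h : a * d - b * c = 1) :
    Matrix.trace (symSq a b c d) + 1 = (a + d) ^ 2 := by
  simp only [symSq, Matrix.trace_fin_three]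
  simp
  linear_combination -h

lemma vecMul_symSq (v : Fin 3 → F) (a b c d : F) :
    Matrix.vecMul v (symSq a b c d) =
      ![v 0 * a^2 + 2 * a * c * v 1 + c^2 * v 2,
        v 0 * (a * b) + v 1 * (a * d + b * c) + v 2 * (c * d),
        v 0 * b^2 + 2 * b * d * v 1 + d^2 * v 2] := by
  ext i
  fin_cases i <;> simp [symSq, Matrix.vecMul, dotProduct, Fin.sum_univ_three] <;> ring

lemma torusElt_neg (x y z s t : F) : torusElt x y z (-s) (-t) = torusElt x y z s t := by
  ext i j
  fin_cases i <;> fin_cases j <;> simp [torusElt, symSq] <;> ring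

/-- `s + t N` of determinant one fixes the vector `(x, y, z)` itself, not only its point. -/
lemma vecMul_torusElt (v : Fin 3 → F) {s t : F}
    (h : s ^ 2 - t ^ 2 * (v 1 ^ 2 - v 0 * v 2) = 1) :
    Matrix.vecMul v (torusElt (v 0) (v 1) (v 2) s t) = v := by
  rw [torusElt, vecMul_symSq]
  ext i
  fin_cases i
  · simp
    linear_combination v 0 * h
  · simp
    linear_combination v 1 * h
  · simp
    linear_combination v 2 * h

lemma scalar_sq {x y z a b c d l : F} (hdet : a * d - b * c = 1) (hn : y ^ 2 - x * z ≠ 0)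
    (e0 : x * a^2 + 2 * a * c * y + c^2 * z = l * x)
    (e1 : x * (a * b) + y * (a * d + b * c) + z * (c * d) = l * y)
    (e2 : x * b^2 + 2 * b * d * y + d^2 * z = l * z) : l = 1 ∨ l = -1 := by
  have h : (a * d - b * c) ^ 2 * (y ^ 2 - x * z) = l ^ 2 * (y ^ 2 - x * z) := by
    calc (a * d - b * c) ^ 2 * (y ^ 2 - x * z)
        = (x * (a * b) + y * (a * d + b * c) + z * (c * d)) ^ 2
          - (x * a^2 + 2 * a * c * y + c^2 * z) * (x * b^2 + 2 * b * d * y + d^2 * z) := by ring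
      _ = l ^ 2 * (y ^ 2 - x * z) := by rw [e0, e1, e2]; ring
  rw [hdet, one_pow] at h
  have h' := mul_right_cancel₀ hn h
  exact sq_eq_one_iff.1 h'.symm

/-- The equation `Aᵀ S A = l S` rewritten entrywise as `S A = l A⁻ᵀ S`, which is linear in `A`. -/
lemma linear_form {x y z a b c d l : F} (hdet : a * d - b * c = 1)
    (e0 : x * a^2 + 2 * a * c * y + c^2 * z = l * x)
    (e1 : x * (a * b) + y * (a * d + b * c) + z * (c * d) = l * y)
    (e2 : x * b^2 + 2 * b * d * y + d^2 * z = l * z) :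
    x * a + y * c = l * (d * x - c * y) ∧ x * b + y * d = l * (d * y - c * z) ∧
      y * a + z * c = l * (a * y - b * x) ∧ y * b + z * d = l * (a * z - b * y) := by
  refine ⟨?_, ?_, ?_, ?_⟩
  · linear_combination d * e0 - c * e1 - (x * a + y * c) * hdet
  · linear_combination d * e1 - c * e2 - (x * b + y * d) * hdet
  · linear_combination a * e1 - b * e0 - (y * a + z * c) * hdet
  · linear_combination a * e2 - b * e1 - (y * b + z * d) * hdet

lemma anti_case {x y z a b c d : F} (h2 : (2 : F) ≠ 0) (hdet : a * d - b * c = 1)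
    (hn : y ^ 2 - x * z ≠ 0)
    (e0 : x * a^2 + 2 * a * c * y + c^2 * z = -1 * x)
    (e1 : x * (a * b) + y * (a * d + b * c) + z * (c * d) = -1 * y)
    (e2 : x * b^2 + 2 * b * d * y + d^2 * z = -1 * z) : a + d = 0 := by
  obtain ⟨f0, f1, f2, f3⟩ := linear_form hdet e0 e1 e2
  by_contra hs
  have hx : x = 0 := (mul_eq_zero.1 (show (a + d) * x = 0 by linear_combination f0)).resolve_left hs
  have hy : y = 0 := by
    have h : (2 * (a + d)) * y = 0 := by linear_combination f1 + f2
    exact (mul_eq_zero.1 h).resolve_left (mul_ne_zero h2 hs)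
  exact hn (by rw [hx, hy]; ring)

lemma comm_case {x y z a b c d : F} (h2 : (2 : F) ≠ 0) (hdet : a * d - b * c = 1)
    (hx : x ≠ 0)
    (e0 : x * a^2 + 2 * a * c * y + c^2 * z = 1 * x)
    (e1 : x * (a * b) + y * (a * d + b * c) + z * (c * d) = 1 * y)
    (e2 : x * b^2 + 2 * b * d * y + d^2 * z = 1 * z) :
    ∃ s t, s * 2 = a + d ∧ a = s - t * y ∧ b = -(t * z) ∧ c = t * x ∧ d = s + t * y := by
  obtain ⟨f0, f1, f2, f3⟩ := linear_form hdet e0 e1 e2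
  have hc : c = c / x * x := by field_simp
  have hb : b = -(c / x * z) := by
    field_simp
    linear_combination f1
  have had : a - d = -(2 * (c / x * y)) := by
    field_simp
    linear_combination f0
  refine ⟨(a + d) / 2, c / x, by field_simp, ?_, hb, hc, ?_⟩
  · apply mul_left_cancel₀ h2
    rw [mul_sub, mul_div_cancel₀ _ h2]
    linear_combination had
  · apply mul_left_cancel₀ h2
    rw [mul_add, mul_div_cancel₀ _ h2]
    linear_combination -had

lemma isSquare_div_of_nonsquare [Fintype F] {u n : F}
    (hu : ¬ IsSquare u) (hn : ¬ IsSquare n) : IsSquare (u / n) := by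
  have hu0 : u ≠ 0 := fun h => hu (h ▸ IsSquare.zero)
  have hn0 : n ≠ 0 := fun h => hn (h ▸ IsSquare.zero)
  have hmul : IsSquare (u * n) := by
    rw [← quadraticChar_one_iff_isSquare (mul_ne_zero hu0 hn0), map_mul,
      quadraticChar_neg_one_iff_not_isSquare.2 hu, quadraticChar_neg_one_iff_not_isSquare.2 hn]
    norm_num
  obtain ⟨r, hr⟩ := hmul
  refine ⟨r / n, ?_⟩
  field_simp
  linear_combination hr

end Helpers

/-- A matrix fixing the point `p` acts on its representative by a scalar. The scalar `0` is allowed,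
which covers the default branch of `actPt`. -/
lemma exists_scalar_of_actPt {M : Matrix (Fin 3) (Fin 3) K} {p : Pt K} (h : actPt K M p = p) :
    ∃ l : K, Matrix.vecMul p.rep M = l • p.rep := by
  unfold actPt at h
  split_ifs at h with h0
  · have h' : Projectivization.mk K _ h0 = Projectivization.mk K p.rep p.rep_nonzero :=
      h.trans p.mk_rep.symm
    obtain ⟨l, hl⟩ := (Projectivization.mk_eq_mk_iff' K _ _ h0 p.rep_nonzero).1 h'
    exact ⟨l, hl.symm⟩
  · exact ⟨0, by simpa using h0⟩

lemma actPt_of_vecMul {M : Matrix (Fin 3) (Fin 3) K} {p : Pt K}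
    (h : Matrix.vecMul p.rep M = p.rep) : actPt K M p = p := by
  have h0 : Matrix.vecMul p.rep M ≠ 0 := by
    rw [h]
    exact p.rep_nonzero
  rw [actPt, dif_pos h0]
  simp only [h, Projectivization.mk_rep]

/-- For an internal point `p` with stabilizer `K₀` in `H`, and every nonzero
square `π ≠ 4` with `π - 4` a nonsquare, `|K₀ ∩ [π]| = 2`. -/
theorem stab_inter_pi (hq : Odd (Fintype.card K)) (p : Pt K) (hp : Internal K p)
    (π : K) (h0 : π ≠ 0) (hsq : IsSquare π) (h4 : π ≠ 4) (hns : Nonsq K (π - 4)) :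
    ({h | h ∈ Hset K ∧ actPt K h p = p} ∩ classOf K π).ncard = 2 := by
  have hchar : ringChar K ≠ 2 := fun h => by
    have := FiniteField.even_card_of_char_two h
    rw [Nat.odd_iff] at hq
    omega
  have h2 : (2 : K) ≠ 0 := Ring.two_ne_zero hchar
  set x := p.rep 0 with hx_def
  set y := p.rep 1 with hy_def
  set z := p.rep 2 with hz_def
  have hns_n : ¬ IsSquare (y ^ 2 - x * z) := hp
  have hn : y ^ 2 - x * z ≠ 0 := fun h => hns_n (h ▸ IsSquare.zero)
  have hx : x ≠ 0 := fun h => hns_n ⟨y, by rw [h]; ring⟩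
  obtain ⟨r, hr⟩ := hsq
  obtain ⟨w, hw⟩ := isSquare_div_of_nonsquare hns hns_n
  have hw' : π - 4 = w ^ 2 * (y ^ 2 - x * z) := by
    rw [div_eq_iff hn] at hw
    rw [hw]; ring
  -- The four solutions are `s = ± r / 2`, `t = ± w / 2`.
  obtain ⟨s, hs⟩ : ∃ s : K, r = 2 * s := ⟨r / 2, by field_simp⟩
  obtain ⟨t, ht⟩ : ∃ t : K, w = 2 * t := ⟨w / 2, by field_simp⟩
  have h4' : (4 : K) ≠ 0 := by
    have := mul_ne_zero h2 h2
    norm_num at this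
    exact this
  have hst : s ^ 2 - t ^ 2 * (y ^ 2 - x * z) = 1 := by
    apply mul_left_cancel₀ h4'
    rw [hs] at hr
    rw [ht] at hw'
    linear_combination hw' - hr
  have hs0 : s ≠ 0 := by
    rintro rfl
    exact h0 (by rw [hr, hs]; ring)
  have ht0 : t ≠ 0 := by
    rintro rfl
    exact h4 (by rw [ht] at hw'; linear_combination hw')
  have hmem : ∀ t' : K, s ^ 2 - t' ^ 2 * (y ^ 2 - x * z) = 1 →
      torusElt x y z s t' ∈ {h | h ∈ Hset K ∧ actPt K h p = p} ∩ classOf K π := by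
    intro t' h
    have hd : (s - t' * y) * (s + t' * y) - (-(t' * z)) * (t' * x) = 1 := by
      linear_combination h
    have hH : torusElt x y z s t' ∈ Hset K := ⟨_, _, _, _, hd, rfl⟩
    refine ⟨⟨hH, actPt_of_vecMul K (vecMul_torusElt p.rep h)⟩, hH, ?_⟩
    rw [torusElt, trace_symSq hd, hr, hs]
    ring
  rw [Set.ncard_eq_two]
  refine ⟨torusElt x y z s t, torusElt x y z s (-t), ?_, ?_⟩
  · intro h
    -- The entries `c d` of the two matrices differ by `2 s t x`.
    have h21 := congrFun (congrFun h 2) 1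
    simp [torusElt, symSq] at h21
    have : 2 * s * t * x = 0 := by linear_combination h21
    exact mul_ne_zero (mul_ne_zero (mul_ne_zero h2 hs0) ht0) hx this
  · apply Set.Subset.antisymm
    · rintro M ⟨⟨-, hfix⟩, ⟨a, b, c, d, hdet, hM⟩, htr⟩
      change M = symSq a b c d at hM
      subst hM
      rw [trace_symSq hdet] at htr
      obtain ⟨l, hl⟩ := exists_scalar_of_actPt K hfix
      rw [vecMul_symSq] at hl
      have e0 := congrFun hl 0
      have e1 := congrFun hl 1
      have e2 := congrFun hl 2
      simp only [Matrix.cons_val, Pi.smul_apply, smul_eq_mul, ← hx_def, ← hy_def, ← hz_def]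
        at e0 e1 e2
      rcases scalar_sq hdet hn e0 e1 e2 with rfl | rfl
      · obtain ⟨s', t', hs', ha, hb, hc, hd⟩ := comm_case h2 hdet hx e0 e1 e2
        have hss : s' ^ 2 = s ^ 2 := by
          apply mul_left_cancel₀ h4'
          rw [hr, hs, ← hs'] at htr
          linear_combination htr
        have htt : t' ^ 2 = t ^ 2 := by
          apply mul_right_cancel₀ hn
          rw [ha, hb, hc, hd] at hdet
          linear_combination hss + hst - hdet
        have hM : symSq a b c d = torusElt x y z s' t' := by
          rw [ha, hb, hc, hd, torusElt]
        rw [hM]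
        rcases sq_eq_sq_iff_eq_or_eq_neg.1 hss with rfl | rfl <;>
          rcases sq_eq_sq_iff_eq_or_eq_neg.1 htt with rfl | rfl
        · exact Or.inl rfl
        · exact Or.inr rfl
        · right
          simpa using torusElt_neg x y z s (-t')
        · left
          exact torusElt_neg x y z s t
      · have := anti_case h2 hdet hn e0 e1 e2
        exact absurd (by rw [← htr, this]; ring) h0
    · rintro M (rfl | rfl)
      · exact hmem t hst
      · exact hmem (-t) (by rw [neg_sq]; exact hst)

end ConicPaper
end
end

section
/- Let p be an internal point and K = {h ∈ H : p^h = p} its stabilizer in H. Then K ∩ [4] = ∅, and K ∩ [θ] = ∅ for every nonzero square θ ∈ F_q with θ ≠ 4 and θ - 4 a nonzero square. -/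
/-!
Identify the point `(x, y, z)` with the symmetric matrix `S = !![x, y; y, z]`, so that
`Q(x, y, z) = -det S`, and let `g ∈ H` come from `A = !![a, b; c, d]` of determinant one. Then `g`
acts by `S ↦ Aᵀ S A`, and `T(g) = (a + d)²`. If `g` fixes an internal point, then `Aᵀ S A = μ S`,
and taking determinants gives `μ = ±1`.

For `μ = -1` the matrix `A` is traceless, so `T(g) = 0`. For `μ = 1` the triple `(c, (d - a)/2, -b)`
is proportional to `(x, y, z)`, whence `T(g) - 4 = (d - a)² + 4bc = (2c/x)² Q(x, y, z)`; here `x ≠ 0`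
because `Q(x, y, z)` is not a square (`trace_eq_zero_or_proportional`). Therefore, when `T(g) ≠ 0`,
the value `T(g) - 4` can only be a square if `c = 0`, and then `A` is scalar and `g = 1`
(`eq_one_of_isSquare_trace`). Both assertions follow, since `1` has `T(1) = 4`.
-/

open scoped Classical

noncomputable section

namespace ConicPaper

variable (K : Type) [Field K] [Fintype K]

/-- A matrix fixing the point `p` has `p.rep` as a row eigenvector; the eigenvalue `0` covers the
default branch of `actPt`. -/
theorem exists_eigenvalue_of_actPt_eq {M : Matrix (Fin 3) (Fin 3) K} {p : Pt K}
    (h : actPt K M p = p) : ∃ μ : K, Matrix.vecMul p.rep M = μ • p.rep := by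
  unfold actPt at h
  split_ifs at h with h0
  · obtain ⟨μ, hμ⟩ := (Projectivization.mk_eq_mk_iff' K _ _ h0 p.rep_nonzero).1
      (h.trans p.mk_rep.symm)
    exact ⟨μ, hμ.symm⟩
  · exact ⟨0, by simpa using h0⟩

/-- The coordinate form of `Aᵀ S A = μ S`, for `S = !![x, y; y, z]` of nonsquare `-det S` and
`A = !![a, b; c, d]` of determinant one. Comparing determinants gives `μ = ±1`. If `μ = -1`, then
`S A = -A⁻ᵀ S` makes `A` traceless; if `μ = 1`, then `S A = A⁻ᵀ S` says that `(c, (d - a)/2, -b)`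
is proportional to `(x, y, z)`. -/
theorem trace_eq_zero_or_proportional {F : Type} [Field F] {x y z a b c d μ : F}
    (hQ : ¬ IsSquare (y ^ 2 - x * z)) (hdet : a * d - b * c = 1)
    (h0 : x * a ^ 2 + y * (2 * a * c) + z * c ^ 2 = μ * x)
    (h1 : x * (a * b) + y * (a * d + b * c) + z * (c * d) = μ * y)
    (h2 : x * b ^ 2 + y * (2 * b * d) + z * d ^ 2 = μ * z) :
    x ≠ 0 ∧ (a + d = 0 ∨ (x * (a - d) + 2 * y * c = 0 ∧ x * b + z * c = 0)) := by
  have hx : x ≠ 0 := by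
    rintro rfl
    exact hQ ⟨y, by ring⟩
  have hQ0 : y ^ 2 - x * z ≠ 0 := by
    intro h
    exact hQ (h ▸ IsSquare.zero)
  -- The form `Q` is multiplied by `(det A)² = 1`, and by `μ²`.
  have hμ : (μ - 1) * (μ + 1) = 0 := by
    have h : (μ ^ 2 - 1) * (y ^ 2 - x * z) = 0 := by
      have e : (μ * y) ^ 2 - (μ * x) * (μ * z) = (a * d - b * c) ^ 2 * (y ^ 2 - x * z) := by
        rw [← h0, ← h1, ← h2]
        ring
      rw [hdet] at e
      linear_combination e
    have := (mul_eq_zero.1 h).resolve_right hQ0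
    linear_combination this
  have k0 : x * a + y * c = μ * (d * x - c * y) := by
    linear_combination d * h0 - c * h1 - (x * a + y * c) * hdet
  have k1 : x * b + y * d = μ * (d * y - c * z) := by
    linear_combination d * h1 - c * h2 - (x * b + y * d) * hdet
  refine ⟨hx, ?_⟩
  rcases mul_eq_zero.1 hμ with h | h
  · obtain rfl : μ = 1 := by linear_combination h
    exact Or.inr ⟨by linear_combination k0, by linear_combination k1⟩
  · obtain rfl : μ = -1 := by linear_combination h
    refine Or.inl ((mul_eq_zero.1 ?_).resolve_left hx)
    linear_combination k0

/-- An element of `H` fixing an internal point, with `T(g) ≠ 0` and `T(g) - 4` a square, is the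
identity: `T(g) - 4 = (2c/x)² Q(p)` with `Q(p)` a nonsquare forces `c = 0`. -/
theorem eq_one_of_isSquare_trace (h2 : (2 : K) ≠ 0) {p : Pt K} (hp : Internal K p)
    {g : Matrix (Fin 3) (Fin 3) K} (hg : g ∈ Hset K) (hfix : actPt K g p = p)
    (hT : Matrix.trace g + 1 ≠ 0) (hsq : IsSquare (Matrix.trace g + 1 - 4)) : g = 1 := by
  obtain ⟨μ, hμ⟩ := exists_eigenvalue_of_actPt_eq K hfix
  obtain ⟨a, b, c, d, hdet, rfl⟩ := hg
  have htr : Matrix.trace !![a^2, a*b, b^2; 2*a*c, a*d + b*c, 2*b*d; c^2, c*d, d^2] + 1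
      = (a + d) ^ 2 := by
    simp only [Matrix.trace_fin_three, Matrix.of_apply, Matrix.cons_val]
    linear_combination -hdet
  rw [htr] at hT hsq
  have e0 := congrFun hμ 0
  have e1 := congrFun hμ 1
  have e2 := congrFun hμ 2
  simp only [Matrix.vecMul, dotProduct, Fin.sum_univ_three, Matrix.of_apply, Matrix.cons_val,
    Pi.smul_apply, smul_eq_mul] at e0 e1 e2
  obtain ⟨hx, h | ⟨k0, k1⟩⟩ := trace_eq_zero_or_proportional hp hdet e0 e1 e2
  · exact absurd (by rw [h]; ring) hT
  obtain ⟨r, hr⟩ := hsq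
  have hkey : (r * p.rep 0) ^ 2 = (2 * c) ^ 2 * (p.rep 1 ^ 2 - p.rep 0 * p.rep 2) := by
    linear_combination -p.rep 0 ^ 2 * hr + 4 * p.rep 0 ^ 2 * hdet
      + (p.rep 0 * (a - d) - 2 * p.rep 1 * c) * k0 + 4 * p.rep 0 * c * k1
  have hc : c = 0 := by
    by_contra hc
    have h2c : 2 * c ≠ 0 := mul_ne_zero h2 hc
    refine hp ⟨r * p.rep 0 / (2 * c), ?_⟩
    rw [← sq, div_pow, hkey, mul_div_cancel_left₀ _ (pow_ne_zero 2 h2c)]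
    rfl
  subst hc
  have hb : b = 0 := (mul_eq_zero.1 (by linear_combination k1)).resolve_left hx
  have had : a - d = 0 := (mul_eq_zero.1 (by linear_combination k0)).resolve_left hx
  obtain rfl : a = d := by linear_combination had
  subst hb
  have ha : a ^ 2 = 1 := by linear_combination hdet
  ext i j
  fin_cases i <;> fin_cases j <;> simp [ha, ← sq]

/-- For an internal point `p` with stabilizer `K₀` in `H`: `K₀ ∩ [4] = ∅`, and
`K₀ ∩ [θ] = ∅` for every nonzero square `θ ≠ 4` with `θ - 4` a nonzero square. -/
theorem stab_inter_four_theta (hq : Odd (Fintype.card K)) (p : Pt K)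
    (hp : Internal K p) :
    ({h | h ∈ Hset K ∧ actPt K h p = p} ∩ class4 K) = ∅ ∧
    (∀ θ : K, θ ≠ 0 → IsSquare θ → θ ≠ 4 → θ - 4 ≠ 0 → IsSquare (θ - 4) →
      ({h | h ∈ Hset K ∧ actPt K h p = p} ∩ classOf K θ) = ∅) := by
  have h2 : (2 : K) ≠ 0 := by
    refine Ring.two_ne_zero fun h => ?_
    have := FiniteField.even_card_of_char_two h
    rw [Nat.odd_iff] at hq
    omega
  constructor
  · refine Set.eq_empty_of_forall_notMem ?_
    rintro g ⟨⟨hg, hfix⟩, -, hT, hne⟩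
    refine hne (eq_one_of_isSquare_trace K h2 hp hg hfix ?_ ?_)
    · rw [hT]
      exact fun h => mul_ne_zero h2 h2 (by linear_combination h)
    · rw [hT, sub_self]
      exact IsSquare.zero
  · intro θ hθ0 _ hθ4 _ hsq
    refine Set.eq_empty_of_forall_notMem ?_
    rintro g ⟨⟨hg, hfix⟩, -, hT⟩
    subst hT
    have hg1 := eq_one_of_isSquare_trace K h2 hp hg hfix hθ0 hsq
    refine hθ4 ?_
    rw [hg1, Matrix.trace_one, Fintype.card_fin]
    norm_num

end ConicPaper
end
end

section
/- Let p be an internal point and let G_p be the subgroup of G fixing the projective point p. Then G_p acts transitively on each of the following sets: the internal points on the line p^⊥, the external points on p^⊥, the passant lines through p, and the secant lines through p. -/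
/-!
The form `Qf` is anisotropic on the plane orthogonal to an internal point `p`
(`perp_anisotropic`). If `u` and `v` lie in this plane and `Qf u * Qf v` is a nonzero square, then
after rescaling `v` both have the same `Qf`-value, so either `u = v` or `u - v` is nonsingular; in
the second case the reflection in `u - v` is an isometry of `Qf` that exchanges `u` and `v` and
fixes `p`, because `p` is orthogonal to `u - v` (`exists_isometry`). Isometries preserve the conic.
Over a finite field the product of two nonsquares is a square, which gives transitivity on internal
and on external points of the polar line. The polarity commutes with reflections and turns
passants and secants through `p` into internal and external points of its polar line, which gives
the two statements on lines.
-/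

open scoped Classical

noncomputable section

namespace ConicPaper

variable (K : Type) [Field K] [Fintype K]

/-- The conic `O`: points with `a1^2 = a0*a2`. -/
def Oset : Set (Pt K) := {p | Qf K p.rep = 0}

/-- The automorphism group `G ≅ PGL(2,q)` of the conic: collineations induced
by nonsingular matrices mapping `O` onto itself. -/
def Gset : Set (Matrix (Fin 3) (Fin 3) K) :=
  {M | IsUnit M.det ∧ actPt K M '' Oset K = Oset K}

/-- The induced action of `M` on lines: a line with coordinate vector `b`
is sent to the line with coordinate vector `M⁻¹ ⬝ b`. -/
def actLn (M : Matrix (Fin 3) (Fin 3) K) (ℓ : Pt K) : Pt K :=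
  if h : Matrix.mulVec M⁻¹ ℓ.rep ≠ 0 then Projectivization.mk K (Matrix.mulVec M⁻¹ ℓ.rep) h else ℓ

/-! ### Reflections of the quadratic form -/

/-- The Gram map of `Qf`: pairing `w` with `gram d` gives the polar form of `Qf` at `(w, d)`.
As a line, `gram d` is the polar line of `d`, up to sign. -/
def gram (d : Fin 3 → K) : Fin 3 → K := ![-d 2, 2 * d 1, -d 0]

/-- The reflection `w ↦ w - B(w, d) / Q(d) • d`, as a matrix acting on row vectors. -/
def reflMat (d : Fin 3 → K) : Matrix (Fin 3) (Fin 3) K :=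
  1 - (Qf K d)⁻¹ • Matrix.vecMulVec (gram K d) d

set_option linter.unusedSectionVars false

variable {K}

/-- The coordinate form of orthogonality for the polar form of `Qf`. -/
def Perp (p w : Fin 3 → K) : Prop := w 0 * p 2 + w 1 * (-2 * p 1) + w 2 * p 0 = 0

lemma vecMul_reflMat (d w : Fin 3 → K) (j : Fin 3) :
    Matrix.vecMul w (reflMat K d) j =
      w j - (Qf K d)⁻¹ * (2 * w 1 * d 1 - w 0 * d 2 - w 2 * d 0) * d j := by
  rw [reflMat, Matrix.vecMul_sub, Matrix.vecMul_smul, Matrix.vecMul_vecMulVec, Matrix.vecMul_one]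
  simp [gram, dotProduct, Fin.sum_univ_three]
  ring

lemma mulVec_reflMat (d w : Fin 3 → K) (j : Fin 3) :
    Matrix.mulVec (reflMat K d) w j =
      w j - (Qf K d)⁻¹ * (d 0 * w 0 + d 1 * w 1 + d 2 * w 2) * gram K d j := by
  rw [reflMat, Matrix.sub_mulVec, Matrix.smul_mulVec, Matrix.vecMulVec_mulVec, Matrix.one_mulVec]
  simp [dotProduct, Fin.sum_univ_three]
  ring

lemma reflMat_mul_self {d : Fin 3 → K} (hd : Qf K d ≠ 0) : reflMat K d * reflMat K d = 1 := by
  apply Matrix.ext_of_single_vecMul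
  intro i
  rw [← Matrix.vecMul_vecMul, Matrix.vecMul_one]
  funext j
  simp only [vecMul_reflMat]
  generalize (Pi.single i (1 : K) : Fin 3 → K) = w
  have h : (Qf K d)⁻¹ * (d 1 ^ 2 - d 0 * d 2) = 1 := inv_mul_cancel₀ hd
  linear_combination 2 * (Qf K d)⁻¹ * (2 * w 1 * d 1 - w 0 * d 2 - w 2 * d 0) * d j * h

lemma Qf_vecMul_reflMat {d : Fin 3 → K} (hd : Qf K d ≠ 0) (w : Fin 3 → K) :
    Qf K (Matrix.vecMul w (reflMat K d)) = Qf K w := by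
  have h : (Qf K d)⁻¹ * (d 1 ^ 2 - d 0 * d 2) = 1 := inv_mul_cancel₀ hd
  have hQ : ∀ x : Fin 3 → K, Qf K x = x 1 ^ 2 - x 0 * x 2 := fun _ => rfl
  rw [hQ (Matrix.vecMul _ _), hQ w, vecMul_reflMat, vecMul_reflMat, vecMul_reflMat]
  linear_combination (Qf K d)⁻¹ * (2 * w 1 * d 1 - w 0 * d 2 - w 2 * d 0) ^ 2 * h

/-- The polarity intertwines the action of a reflection on points with its action on lines. -/
lemma reflMat_mulVec_gram (d r : Fin 3 → K) :
    Matrix.mulVec (reflMat K d) (gram K r) = gram K (Matrix.vecMul r (reflMat K d)) := by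
  funext j
  rw [mulVec_reflMat]
  fin_cases j <;> simp [gram, vecMul_reflMat] <;> ring

/-! ### The orthogonal complement of an internal point -/

/-- The polar line of an internal point misses the conic: `Qf` is anisotropic there. -/
lemma perp_anisotropic {p d : Fin 3 → K} (hp : ¬ IsSquare (Qf K p)) (hd : Perp p d)
    (h0 : Qf K d = 0) : d = 0 := by
  unfold Perp at hd
  unfold Qf at h0
  have key : Qf K p * d 0 ^ 2 = (p 1 * d 0 - p 0 * d 1) ^ 2 := by
    unfold Qf
    linear_combination (-(p 0 * d 0)) * hd - p 0 ^ 2 * h0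
  have d0 : d 0 = 0 := by
    by_contra h
    refine hp ⟨(p 1 * d 0 - p 0 * d 1) / d 0, ?_⟩
    field_simp
    linear_combination key
  have d1 : d 1 = 0 := by
    have : d 1 ^ 2 = 0 := by rw [d0] at h0; linear_combination h0
    exact pow_eq_zero_iff (two_ne_zero) |>.1 this
  have d2 : d 2 = 0 := by
    by_contra h
    have : p 0 = 0 := by
      rw [d0, d1] at hd
      have : d 2 * p 0 = 0 := by linear_combination hd
      exact (mul_eq_zero.1 this).resolve_left h
    exact hp ⟨p 1, by rw [Qf, this]; ring⟩
  funext j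
  fin_cases j <;> simp [d0, d1, d2]

/-- Witt's theorem for the anisotropic plane orthogonal to `p`, in projective form: two of its
vectors whose `Qf`-values agree up to a square are exchanged, up to scalars, by an involutory
isometry fixing `p` (a reflection, or the identity when they agree after rescaling). -/
lemma exists_isometry {p u v : Fin 3 → K} (hp : ¬ IsSquare (Qf K p)) (hu : Perp p u)
    (hv : Perp p v) (hu0 : Qf K u ≠ 0) (hv0 : Qf K v ≠ 0) (hs : IsSquare (Qf K u * Qf K v)) :
    ∃ M : Matrix (Fin 3) (Fin 3) K, M * M = 1 ∧ (∀ w, Qf K (Matrix.vecMul w M) = Qf K w) ∧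
      (∀ r, Matrix.mulVec M (gram K r) = gram K (Matrix.vecMul r M)) ∧
      Matrix.vecMul p M = p ∧ ∃ c : K, c ≠ 0 ∧ Matrix.vecMul u M = c • v := by
  obtain ⟨s, hs⟩ := hs
  have s0 : s ≠ 0 := by
    rintro rfl
    exact mul_ne_zero hu0 hv0 (by simpa using hs)
  -- `c` is chosen so that `c • v` and `u` have the same `Qf`-value.
  set c := s / Qf K v with hc
  have c0 : c ≠ 0 := div_ne_zero s0 hv0
  have hcv : c ^ 2 * Qf K v = Qf K u := by
    rw [hc]; field_simp; linear_combination -hs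
  set d := u - c • v with hd
  have hj : ∀ j, d j = u j - c * v j := fun j => by simp [hd]
  have hpd : Perp p d := by
    unfold Perp at *
    rw [hj, hj, hj]
    linear_combination hu - c * hv
  by_cases h0 : Qf K d = 0
  · have := perp_anisotropic hp hpd h0
    refine ⟨1, by simp, by simp, by simp, by simp, c, c0, ?_⟩
    rw [Matrix.vecMul_one]
    exact sub_eq_zero.1 this
  · refine ⟨reflMat K d, reflMat_mul_self h0, Qf_vecMul_reflMat h0, reflMat_mulVec_gram d, ?_,
      c, c0, ?_⟩
    · funext j
      rw [vecMul_reflMat]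
      unfold Perp at hpd
      linear_combination (Qf K d)⁻¹ * d j * hpd
    · funext j
      -- Equality of `Qf`-values makes the polar form at `(u, u - c • v)` equal to `Qf (u - c • v)`.
      have hB : 2 * u 1 * d 1 - u 0 * d 2 - u 2 * d 0 = Qf K d := by
        unfold Qf at hcv ⊢
        rw [hj, hj, hj]
        linear_combination -hcv
      rw [vecMul_reflMat, hB, inv_mul_cancel₀ h0, hj]
      simp

/-! ### Passage to projective points and lines -/

lemma vecMul_ne_zero_of_invol {M : Matrix (Fin 3) (Fin 3) K} (hM : M * M = 1) {w : Fin 3 → K}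
    (hw : w ≠ 0) : Matrix.vecMul w M ≠ 0 := by
  intro h
  apply hw
  rw [← Matrix.vecMul_one w, ← hM, ← Matrix.vecMul_vecMul, h, Matrix.zero_vecMul]

lemma mulVec_ne_zero_of_invol {M : Matrix (Fin 3) (Fin 3) K} (hM : M * M = 1) {w : Fin 3 → K}
    (hw : w ≠ 0) : Matrix.mulVec M w ≠ 0 := by
  intro h
  apply hw
  rw [← Matrix.one_mulVec w, ← hM, ← Matrix.mulVec_mulVec, h, Matrix.mulVec_zero]

lemma actPt_eq {M : Matrix (Fin 3) (Fin 3) K} (hM : M * M = 1) {x y : Pt K} {c : K}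
    (h : Matrix.vecMul x.rep M = c • y.rep) : actPt K M x = y := by
  have hne := vecMul_ne_zero_of_invol hM x.rep_nonzero
  rw [actPt, dif_pos hne]
  conv_rhs => rw [← y.mk_rep]
  exact (Projectivization.mk_eq_mk_iff' K _ _ hne y.rep_nonzero).2 ⟨c, h.symm⟩

lemma actLn_eq {M : Matrix (Fin 3) (Fin 3) K} (hM : M * M = 1) {x y : Pt K} {c : K}
    (h : Matrix.mulVec M x.rep = c • y.rep) : actLn K M x = y := by
  have hinv : M⁻¹ = M := Matrix.inv_eq_left_inv hM
  have hne := mulVec_ne_zero_of_invol hM x.rep_nonzero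
  rw [← hinv] at hne h
  rw [actLn, dif_pos hne]
  conv_rhs => rw [← y.mk_rep]
  exact (Projectivization.mk_eq_mk_iff' K _ _ hne y.rep_nonzero).2 ⟨c, h.symm⟩

lemma exists_actPt_rep {M : Matrix (Fin 3) (Fin 3) K} (hM : M * M = 1) (x : Pt K) :
    ∃ a : K, a ≠ 0 ∧ Matrix.vecMul x.rep M = a • (actPt K M x).rep := by
  have hne := vecMul_ne_zero_of_invol hM x.rep_nonzero
  rw [actPt, dif_pos hne]
  obtain ⟨a, ha⟩ := Projectivization.exists_smul_eq_mk_rep K _ hne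
  refine ⟨(a⁻¹ : Kˣ), Units.ne_zero _, ?_⟩
  rw [← ha, Units.smul_def, smul_smul, Units.inv_mul, one_smul]

lemma Qf_smul (a : K) (w : Fin 3 → K) : Qf K (a • w) = a ^ 2 * Qf K w := by
  simp [Qf]; ring

lemma mem_Gset_of_invol {M : Matrix (Fin 3) (Fin 3) K} (hM : M * M = 1)
    (hQ : ∀ w, Qf K (Matrix.vecMul w M) = Qf K w) : M ∈ Gset K := by
  have hO : ∀ x ∈ Oset K, actPt K M x ∈ Oset K := by
    intro x hx
    obtain ⟨a, ha, h⟩ := exists_actPt_rep hM x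
    have h1 := hQ x.rep
    rw [h, Qf_smul, show Qf K x.rep = 0 from hx] at h1
    exact (mul_eq_zero.1 h1).resolve_left (pow_ne_zero 2 ha)
  refine ⟨?_, Set.Subset.antisymm ?_ ?_⟩
  · exact (Matrix.isUnit_iff_isUnit_det M).1 (IsUnit.of_mul_eq_one M hM)
  · rintro _ ⟨x, hx, rfl⟩
    exact hO x hx
  · intro x hx
    refine ⟨actPt K M x, hO x hx, ?_⟩
    obtain ⟨a, ha, h⟩ := exists_actPt_rep hM x
    apply actPt_eq hM (c := a⁻¹)
    have h2 : (actPt K M x).rep = a⁻¹ • Matrix.vecMul x.rep M := by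
      rw [h, smul_smul, inv_mul_cancel₀ ha, one_smul]
    rw [h2, Matrix.smul_vecMul, Matrix.vecMul_vecMul, hM, Matrix.vecMul_one]

lemma exists_Gset_points {p u v : Pt K} (hp : Internal K p) (hu : OnPerp K p u)
    (hv : OnPerp K p v) (hu0 : Qf K u.rep ≠ 0) (hv0 : Qf K v.rep ≠ 0)
    (hs : IsSquare (Qf K u.rep * Qf K v.rep)) :
    ∃ M ∈ Gset K, actPt K M p = p ∧ actPt K M u = v := by
  obtain ⟨M, hM, hQ, -, hfix, c, -, huv⟩ := exists_isometry hp hu hv hu0 hv0 hs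
  exact ⟨M, mem_Gset_of_invol hM hQ, actPt_eq hM (c := 1) (by rw [hfix, one_smul]),
    actPt_eq hM huv⟩

/-- Lines through `p` are handled through their poles, which lie on the polar line of `p`; the
pole is scaled so that its `Qf`-value is the discriminant of the line. -/
lemma exists_Gset_lines (h2 : (2 : K) ≠ 0) {p l l' : Pt K} (hp : Internal K p) (hl : OnL K p l)
    (hl' : OnL K p l') (h0 : lineDisc K l ≠ 0) (h0' : lineDisc K l' ≠ 0)
    (hs : IsSquare (lineDisc K l * lineDisc K l')) :
    ∃ M ∈ Gset K, actPt K M p = p ∧ actLn K M l = l' := by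
  set pole : (Fin 3 → K) → (Fin 3 → K) := fun b => ![2 * b 2, -b 1, 2 * b 0] with hpole
  have hdisc : ∀ m : Pt K, Qf K (pole m.rep) = lineDisc K m := by
    intro m; simp [hpole, Qf, lineDisc]; ring
  have hperp : ∀ m : Pt K, OnL K p m → Perp p.rep (pole m.rep) := by
    intro m hm
    unfold OnL at hm
    simp only [hpole, Perp, Matrix.cons_val]
    linear_combination 2 * hm
  have hgram : ∀ b : Fin 3 → K, gram K (pole b) = (-2 : K) • b := by
    intro b; funext j; fin_cases j <;> simp [hpole, gram]
  rw [← hdisc] at h0 h0' hs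
  rw [← hdisc l'] at hs
  obtain ⟨M, hM, hQ, hG, hfix, c, -, huv⟩ :=
    exists_isometry hp (hperp l hl) (hperp l' hl') h0 h0' hs
  refine ⟨M, mem_Gset_of_invol hM hQ, actPt_eq hM (c := 1) (by rw [hfix, one_smul]),
    actLn_eq hM (c := c) ?_⟩
  have hsmul : gram K (c • pole l'.rep) = c • gram K (pole l'.rep) := by
    funext j; fin_cases j <;> simp [gram]; ring
  have h := hG (pole l.rep)
  rw [huv, hsmul, hgram, hgram, Matrix.mulVec_smul, smul_comm c] at h
  exact smul_right_injective _ (neg_ne_zero.2 h2) h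

lemma isSquare_mul_of_not {a b : K} (ha : ¬ IsSquare a) (hb : ¬ IsSquare b) :
    IsSquare (a * b) := by
  have h2 : ringChar K ≠ 2 := fun h => ha (FiniteField.isSquare_of_char_two h a)
  have hab : a * b ≠ 0 := by
    refine mul_ne_zero ?_ ?_ <;> rintro rfl <;> simp_all
  rw [← quadraticChar_one_iff_isSquare hab, map_mul,
    (quadraticChar_neg_one_iff_not_isSquare (F := K)).2 ha,
    (quadraticChar_neg_one_iff_not_isSquare (F := K)).2 hb]
  norm_num

lemma ne_zero_of_not_isSquare {a : K} (ha : ¬ IsSquare a) : a ≠ 0 := by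
  rintro rfl; exact ha (IsSquare.zero)

variable (K)

/-- The stabilizer `G_p` of an internal point `p` in `G` acts transitively on
the internal points of `p^⊥`, the external points of `p^⊥`, the passant lines
through `p`, and the secant lines through `p`. -/
theorem Gp_transitive (hq : Odd (Fintype.card K)) (p : Pt K) (hp : Internal K p) :
    (∀ u v : Pt K, Internal K u → OnPerp K p u → Internal K v → OnPerp K p v →
      ∃ M ∈ Gset K, actPt K M p = p ∧ actPt K M u = v) ∧
    (∀ u v : Pt K, External K u → OnPerp K p u → External K v → OnPerp K p v →
      ∃ M ∈ Gset K, actPt K M p = p ∧ actPt K M u = v) ∧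
    (∀ l l' : Pt K, Passant K l → OnL K p l → Passant K l' → OnL K p l' →
      ∃ M ∈ Gset K, actPt K M p = p ∧ actLn K M l = l') ∧
    (∀ l l' : Pt K, Secant K l → OnL K p l → Secant K l' → OnL K p l' →
      ∃ M ∈ Gset K, actPt K M p = p ∧ actLn K M l = l') := by
  have h2 : (2 : K) ≠ 0 := Ring.two_ne_zero (by
    intro h
    have := FiniteField.even_card_iff_char_two.1 h
    obtain ⟨k, hk⟩ := hq
    omega)
  refine ⟨fun u v hu hpu hv hpv => ?_, fun u v hu hpu hv hpv => ?_,
    fun l l' hl hpl hl' hpl' => ?_, fun l l' hl hpl hl' hpl' => ?_⟩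
  · exact exists_Gset_points hp hpu hpv (ne_zero_of_not_isSquare hu) (ne_zero_of_not_isSquare hv)
      (isSquare_mul_of_not hu hv)
  · exact exists_Gset_points hp hpu hpv hu.1 hv.1 (hu.2.mul hv.2)
  · exact exists_Gset_lines h2 hp hpl hpl' (ne_zero_of_not_isSquare hl)
      (ne_zero_of_not_isSquare hl') (isSquare_mul_of_not hl hl')
  · exact exists_Gset_lines h2 hp hpl hpl' hl.1 hl'.1 (hl.2.mul hl'.2)

end ConicPaper
end
end
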